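/- Let F ∈ ℂ[x,y,s,t] be an irreducible polynomial of total degree δ such that none of F_x, F_y, F_s, F_t is identically zero. Define V := {(x,y,x',y',s,t) ∈ ℂ⁶ : F(x,y,s,t) = 0, F(x',y',s,t) = 0}, G := F_s(x,y,s,t)·F_t(x',y',s,t) − F_s(x',y',s,t)·F_t(x,y,s,t), W := V ∩ Z(G), V₀ := ℂ⁴×𝒯, and let W̃ be the union of the irreducible components of W not contained in V₀. Assume W̃ has dimension 4. Then there exists an algebraic subvariety Z₀ ⊆ Z(F) of dimension at most 2 such that for every (x,y,s,t) ∈ Z(F)\Z₀ there exist x', y' ∈ ℂ such that (a) (x,y,x',y',s,t) is a regular (smooth) point of W̃, and (b) none of the partial derivatives F_x, F_y, F_s, F_t vanishes at (x,y,s,t) or at (x',y',s,t). -/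

import Mathlib

open MvPolynomial

noncomputable section

def ev4 (F : MvPolynomial (Fin 4) ℂ) (x y s t : ℂ) : ℂ := eval ![x, y, s, t] F

def TT (F : MvPolynomial (Fin 4) ℂ) : Set (ℂ × ℂ) :=
  {q : ℂ × ℂ | ∀ x y : ℂ, ev4 F x y q.1 q.2 = 0}

def zeroSetOf {n : ℕ} (I : Set (MvPolynomial (Fin n) ℂ)) : Set (Fin n → ℂ) :=
  {p | ∀ f ∈ I, eval p f = 0}

def IsAlgSet {n : ℕ} (S : Set (Fin n → ℂ)) : Prop :=
  ∃ I : Set (MvPolynomial (Fin n) ℂ), S = zeroSetOf I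

def IsIrredAlgSet {n : ℕ} (S : Set (Fin n → ℂ)) : Prop :=
  IsAlgSet S ∧ S.Nonempty ∧
    ∀ S₁ S₂ : Set (Fin n → ℂ), IsAlgSet S₁ → IsAlgSet S₂ → S = S₁ ∪ S₂ → S = S₁ ∨ S = S₂

def algDimLE {n : ℕ} (S : Set (Fin n → ℂ)) (d : ℕ) : Prop :=
  ∀ Z : Fin (d + 2) → Set (Fin n → ℂ),
    (∀ i, IsIrredAlgSet (Z i) ∧ Z i ⊆ S) → ¬ StrictMono Z

def algDimGE {n : ℕ} (S : Set (Fin n → ℂ)) (d : ℕ) : Prop :=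
  ∃ Z : Fin (d + 1) → Set (Fin n → ℂ),
    (∀ i, IsIrredAlgSet (Z i) ∧ Z i ⊆ S) ∧ StrictMono Z

/-- `S` is an irreducible component of `W`: a maximal irreducible algebraic subset of `W`. -/
def IsComponentOf {n : ℕ} (S W : Set (Fin n → ℂ)) : Prop :=
  IsIrredAlgSet S ∧ S ⊆ W ∧
    ∀ S' : Set (Fin n → ℂ), IsIrredAlgSet S' → S' ⊆ W → S ⊆ S' → S = S'

/-- The variety `V ⊂ ℂ⁶`, with coordinates `(x, y, x', y', s, t)`. -/
def Vvar (F : MvPolynomial (Fin 4) ℂ) : Set (Fin 6 → ℂ) :=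
  {w | eval ![w 0, w 1, w 4, w 5] F = 0 ∧ eval ![w 2, w 3, w 4, w 5] F = 0}

/-- The value of `G = F_s(x,y,s,t)·F_t(x',y',s,t) − F_s(x',y',s,t)·F_t(x,y,s,t)`. -/
def Gval (F : MvPolynomial (Fin 4) ℂ) (w : Fin 6 → ℂ) : ℂ :=
  eval ![w 0, w 1, w 4, w 5] (pderiv 2 F) * eval ![w 2, w 3, w 4, w 5] (pderiv 3 F) -
    eval ![w 2, w 3, w 4, w 5] (pderiv 2 F) * eval ![w 0, w 1, w 4, w 5] (pderiv 3 F)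

/-- `W = V ∩ Z(G)`. -/
def Wvar (F : MvPolynomial (Fin 4) ℂ) : Set (Fin 6 → ℂ) :=
  Vvar F ∩ {w | Gval F w = 0}

/-- `V₀ = ℂ⁴ × 𝒯`. -/
def V0 (F : MvPolynomial (Fin 4) ℂ) : Set (Fin 6 → ℂ) :=
  {w | (w 4, w 5) ∈ TT F}

/-- `W̃`: the union of the irreducible components of `W` that are not contained in `V₀`. -/
def Wtilde (F : MvPolynomial (Fin 4) ℂ) : Set (Fin 6 → ℂ) :=
  ⋃₀ {S | IsComponentOf S (Wvar F) ∧ ¬ S ⊆ V0 F}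

/-- The Zariski tangent vectors to `X ⊆ ℂⁿ` at `w`: vectors annihilated by the differential
at `w` of every polynomial vanishing on `X`. -/
def TangentVecs {n : ℕ} (X : Set (Fin n → ℂ)) (w : Fin n → ℂ) : Set (Fin n → ℂ) :=
  {u | ∀ f : MvPolynomial (Fin n) ℂ, (∀ z ∈ X, eval z f = 0) →
    ∑ i, u i * eval w (pderiv i f) = 0}

/-- The Zariski tangent space of `X` at `w` has dimension at most `d`. -/
def TangentDimLE {n : ℕ} (X : Set (Fin n → ℂ)) (w : Fin n → ℂ) (d : ℕ) : Prop :=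
  ∀ v : Fin (d + 1) → (Fin n → ℂ), (∀ i, v i ∈ TangentVecs X w) → ¬ LinearIndependent ℂ v

/-- The local dimension of `X` at `w` is at least `d`: there is a strictly increasing chain
of `d+1` irreducible algebraic subsets of `X` whose smallest member contains `w`. -/
def LocalDimGE {n : ℕ} (X : Set (Fin n → ℂ)) (w : Fin n → ℂ) (d : ℕ) : Prop :=
  ∃ Z : Fin (d + 1) → Set (Fin n → ℂ),
    (∀ i, IsIrredAlgSet (Z i) ∧ Z i ⊆ X) ∧ StrictMono Z ∧ w ∈ Z 0

/-- `w` is a regular (smooth) point of `X`: the dimension of the Zariski tangent space of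
`X` at `w` equals the local dimension of `X` at `w`. -/
def IsRegularPt {n : ℕ} (X : Set (Fin n → ℂ)) (w : Fin n → ℂ) : Prop :=
  w ∈ X ∧ ∃ d : ℕ, LocalDimGE X w d ∧ ¬ LocalDimGE X w (d + 1) ∧ TangentDimLE X w d

/-!
Some component `S` of `W` not contained in `V₀` has dimension at least 4. Over a general point
`(x, y, s, t)` of the projection of `S` to `Z(F)`, the fibre consists of pairs `(x', y')` with
`F(x', y', s, t) = 0`, where `F(·, ·, s, t)` is not identically zero since `S ⊄ V₀`; so it has
dimension at most 1. Were the projection not dominant, its image would have dimension at most 2 and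
`S` dimension at most 3. By symmetry both projections `S → Z(F)` are dominant, and for degree
reasons no partial derivative of `F`, pulled back along either of them, vanishes identically on `S`.

By Chevalley's theorem every point of `Z(F)` off a proper hypersurface section, which has dimension
at most 2, lifts to a point of `S` where all these derivatives are nonzero. There `F_x ≠ 0` in both
groups of variables already bounds the tangent space of `V` by 4, while every local dimension of
`S` is at least 4; hence the point is regular on `W̃`.
-/

theorem height_eq_of_isMaximal_mvPolynomial {k : Type*} [Field k] (n : ℕ)
    (M : Ideal (MvPolynomial (Fin n) k)) [hM : M.IsMaximal] : M.height = n := by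
  induction n with
  | zero =>
    let e := isEmptyRingEquiv k (Fin 0)
    have hfield := MulEquiv.isField (Field.toIsField k) e.toMulEquiv
    have hbot : M = ⊥ :=
      ((Ring.isField_iff_maximal_bot.mp hfield).eq_of_le hM.ne_top bot_le).symm
    simp [hbot]
  | succ n ih =>
    let e : MvPolynomial (Fin (n + 1)) k ≃+* Polynomial (MvPolynomial (Fin n) k) :=
      (finSuccEquiv k n).toRingEquiv
    have hmap : (M.map e).IsMaximal := Ideal.map_isMaximal_of_equiv e
    have hunder : ((M.map e).under (MvPolynomial (Fin n) k)).IsMaximal :=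
      Polynomial.isMaximal_comap_C_of_isJacobsonRing _
    have hover : (M.map e).LiesOver ((M.map e).under (MvPolynomial (Fin n) k)) := ⟨rfl⟩
    rw [← e.height_map, Polynomial.height_eq_height_add_one ((M.map e).under _) (M.map e), ih]
    simp

theorem ringKrullDim_le_of_isIntegral (R S : Type*) [CommRing R] [CommRing S] [Algebra R S]
    [Algebra.IsIntegral R S] : ringKrullDim S ≤ ringKrullDim R :=
  Order.krullDim_le_of_strictMono (PrimeSpectrum.comap (algebraMap R S))
    fun p q hpq => Ideal.IsIntegral.comap_lt_comap (show p.asIdeal < q.asIdeal from hpq)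

theorem ringKrullDim_add_two_le_of_surjective {R S : Type*} [CommRing R] [IsDomain R]
    [CommRing S] {F g : R} (hF : Prime F) (hg : ¬F ∣ g) {f : R →+* S}
    (hf : Function.Surjective f) (hfF : f F = 0) (hfg : f g = 0) :
    ringKrullDim S + 2 ≤ ringKrullDim R := by
  have : (Ideal.span {F}).IsPrime := (Ideal.span_singleton_prime hF.ne_zero).mpr hF
  have hker : ∀ a ∈ Ideal.span {F}, f a = 0 := fun a ha => by
    obtain ⟨c, rfl⟩ := Ideal.mem_span_singleton.mp ha
    simp [hfF]
  have hg' : Ideal.Quotient.mk (Ideal.span {F}) g ≠ 0 := by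
    rwa [Ne, Ideal.Quotient.eq_zero_iff_mem, Ideal.mem_span_singleton]
  calc ringKrullDim S + 2 = ringKrullDim S + 1 + 1 := by rw [add_assoc, one_add_one_eq_two]
    _ ≤ ringKrullDim (R ⧸ Ideal.span {F}) + 1 := by
      gcongr
      exact ringKrullDim_succ_le_of_surjective (Ideal.Quotient.lift _ f hker)
        (Ideal.Quotient.lift_surjective_of_surjective _ hker hf)
        (mem_nonZeroDivisors_of_ne_zero hg') (by simpa)
    _ ≤ ringKrullDim R :=
      ringKrullDim_quotient_succ_le_of_nonZeroDivisor (mem_nonZeroDivisors_of_ne_zero hF.ne_zero)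

theorem trdeg_lt_card_of_aeval_eq_zero {R A ι : Type*} [CommRing R] [CommRing A] [IsDomain A]
    [Algebra R A] [FaithfulSMul R A] [Fintype ι] {y : ι → A}
    [Algebra.IsAlgebraic (Algebra.adjoin R (Set.range y)) A] {p : MvPolynomial ι R} (hp : p ≠ 0)
    (hyp : aeval y p = 0) : Algebra.trdeg R A < Fintype.card ι := by
  by_contra! hle
  have hbasis : IsTranscendenceBasis R y :=
    Algebra.IsAlgebraic.isTranscendenceBasis_of_lift_le_trdeg_of_finite R y (by simpa using hle)
  exact hp (hbasis.1.eq_zero_of_aeval_eq_zero p hyp)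

-- Noether normalization reduces all three to polynomial rings: heights lift by going-down.
theorem exists_trdeg_eq_and_ringKrullDim_eq_and_height_eq (k A : Type*) [Field k]
    [CommRing A] [IsDomain A] [Algebra k A] [Algebra.FiniteType k A] :
    ∃ d : ℕ, Algebra.trdeg k A = d ∧ ringKrullDim A = d ∧
      ∀ (m : Ideal A) [m.IsMaximal], m.height = d := by
  obtain ⟨d, g, hinj, hint⟩ := exists_integral_inj_algHom_of_fg k A
  algebraize [g.toRingHom]
  have : FaithfulSMul (MvPolynomial (Fin d) k) A :=
    (faithfulSMul_iff_algebraMap_injective _ _).mpr hinj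
  have : Algebra.IsIntegral (MvPolynomial (Fin d) k) A := ⟨hint⟩
  have : IsScalarTower k (MvPolynomial (Fin d) k) A := .of_algHom g
  have : IsNoetherianRing A := Algebra.FiniteType.isNoetherianRing k A
  have hle : ringKrullDim A ≤ d := by
    simpa [ringKrullDim_of_isNoetherianRing] using
      ringKrullDim_le_of_isIntegral (MvPolynomial (Fin d) k) A
  have hge (m : Ideal A) [m.IsMaximal] : d ≤ m.height := by
    have : (m.under (MvPolynomial (Fin d) k)).IsMaximal :=
      Ideal.isMaximal_comap_of_isIntegral_of_isMaximal m
    rw [Ideal.height_eq_height_add_of_liesOver_of_hasGoingDown (m.under (MvPolynomial (Fin d) k)),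
      height_eq_of_isMaximal_mvPolynomial]
    exact le_self_add
  have hheight (m : Ideal A) [hm : m.IsMaximal] : (m.height : WithBot ℕ∞) ≤ ringKrullDim A :=
    Ideal.height_le_ringKrullDim_of_ne_top hm.ne_top
  refine ⟨d, ?_, hle.antisymm ?_, fun m hm => (hge m).antisymm' ?_⟩
  · have := lift_trdeg_add_eq k (MvPolynomial (Fin d) k) A
    rw [trdeg_eq_zero (R := MvPolynomial (Fin d) k), trdeg_of_isDomain] at this
    simpa [eq_comm] using this
  · obtain ⟨m, hm⟩ := Ideal.exists_maximal A
    exact (WithBot.coe_le_coe.mpr (hge m)).trans (hheight m)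
  · exact WithBot.coe_le_coe.mp ((hheight m).trans hle)

theorem ringKrullDim_add_one_le_of_aeval_eq_zero {k A ι : Type*} [Field k] [CommRing A]
    [IsDomain A] [Algebra k A] [Fintype ι] (B : Subalgebra k A) [Algebra.FiniteType k B]
    {y : ι → A} (hy : Algebra.adjoin B (Set.range y) = ⊤) {p : MvPolynomial ι B} (hp : p ≠ 0)
    (hyp : aeval y p = 0) : ringKrullDim A + 1 ≤ ringKrullDim B + Fintype.card ι := by
  have : Algebra.FiniteType B A := ⟨⟨(Set.finite_range y).toFinset, by simpa using hy⟩⟩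
  have : Algebra.FiniteType k A := .trans ‹_› this
  have : Algebra.IsAlgebraic (Algebra.adjoin B (Set.range y)) A :=
    ⟨fun a => isAlgebraic_algebraMap (⟨a, hy ▸ trivial⟩ : Algebra.adjoin B (Set.range y))⟩
  obtain ⟨a, ha, hdimA, -⟩ := exists_trdeg_eq_and_ringKrullDim_eq_and_height_eq k A
  obtain ⟨b, hb, hdimB, -⟩ := exists_trdeg_eq_and_ringKrullDim_eq_and_height_eq k B
  have hlt := trdeg_lt_card_of_aeval_eq_zero hp hyp
  obtain ⟨c, hc⟩ := Cardinal.lt_aleph0.mp (hlt.trans (Cardinal.natCast_lt_aleph0))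
  have hadd : b + c = a := by
    have := trdeg_add_eq k B (A := A)
    rw [ha, hb, hc] at this
    exact_mod_cast this
  have hcι : c < Fintype.card ι := by
    rw [hc] at hlt
    exact_mod_cast hlt
  rw [hdimA, hdimB]
  exact_mod_cast (by omega : a + 1 ≤ b + Fintype.card ι)

theorem adjoin_subalgebra_eq_top {k A : Type*} [CommRing k] [CommRing A] [Algebra k A]
    {B : Subalgebra k A} {s t : Set A} (hs : s ⊆ B) (h : Algebra.adjoin k (s ∪ t) = ⊤) :
    Algebra.adjoin B t = ⊤ := by
  have hle : Algebra.adjoin k (s ∪ t) ≤ (Algebra.adjoin B t).restrictScalars k :=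
    Algebra.adjoin_le (Set.union_subset
      (fun a ha => (Algebra.adjoin B t).algebraMap_mem ⟨a, hs ha⟩) Algebra.subset_adjoin)
  exact eq_top_iff.mpr fun a _ => hle (h ▸ trivial)

-- `q` is `p` viewed over `B`; it is nonzero because specialising its coefficients by `ψ` leaves a
-- polynomial that does not vanish at `z`.
theorem exists_ne_zero_aeval_eq_zero {k B A σ ι : Type*} [CommRing k] [CommRing B] [CommRing A]
    [Algebra k B] [Algebra k A] [Algebra B A] [IsScalarTower k B A] {x : σ → B} {y : ι → A}
    {p : MvPolynomial (σ ⊕ ι) k} (hp : aeval (Sum.elim (algebraMap B A ∘ x) y) p = 0)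
    (ψ : B →ₐ[k] k) {z : ι → k} (hz : eval (Sum.elim (ψ ∘ x) z) p ≠ 0) :
    ∃ q : MvPolynomial ι B, q ≠ 0 ∧ aeval y q = 0 := by
  let θ : MvPolynomial (σ ⊕ ι) k →ₐ[k] MvPolynomial ι B := aeval (Sum.elim (C ∘ x) X)
  have heval : (eval₂Hom (ψ : B →+* k) z).comp
      (θ : MvPolynomial (σ ⊕ ι) k →+* MvPolynomial ι B) = eval (Sum.elim (ψ ∘ x) z) := by
    ext i
    · simp [θ]
    · rcases i with i | i <;> simp [θ]
  have haeval : ((aeval y).restrictScalars k).comp θ =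
      aeval (Sum.elim (algebraMap B A ∘ x) y) := by
    ext (i | i) <;> simp [θ]
  refine ⟨θ p, fun h0 => hz ?_, (DFunLike.congr_fun haeval p).trans hp⟩
  rw [← heval, RingHom.comp_apply, RingHom.coe_coe, h0, map_zero]

theorem ringKrullDim_add_three_le_of_not_dvd {k A σ ι : Type*} [Field k] [CommRing A]
    [IsDomain A] [Algebra k A] [Fintype σ] [Fintype ι] {x : σ → A} {y : ι → A}
    (hgen : Algebra.adjoin k (Set.range x ∪ Set.range y) = ⊤)
    {F g : MvPolynomial σ k} (hF : Prime F) (hFg : ¬F ∣ g) (hxF : aeval x F = 0)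
    (hxg : aeval x g = 0) {p : MvPolynomial (σ ⊕ ι) k} (hp : aeval (Sum.elim x y) p = 0)
    (ψ : A →ₐ[k] k) {z : ι → k} (hz : eval (Sum.elim (ψ ∘ x) z) p ≠ 0) :
    ringKrullDim A + 3 ≤ Fintype.card σ + Fintype.card ι := by
  let f : MvPolynomial σ k →ₐ[k] A := aeval x
  let B := f.range
  have : Algebra.FiniteType k B := .of_surjective f.rangeRestrict f.rangeRestrict_surjective
  have hx (i : σ) : x i ∈ B := ⟨X i, by simp [f]⟩
  obtain ⟨q, hq, hyq⟩ := exists_ne_zero_aeval_eq_zero (B := B) (x := fun i => ⟨x i, hx i⟩) hp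
    (ψ.comp B.val) hz
  have hA : ringKrullDim A + 1 ≤ ringKrullDim B + Fintype.card ι :=
    ringKrullDim_add_one_le_of_aeval_eq_zero B
      (adjoin_subalgebra_eq_top (Set.range_subset_iff.mpr hx) hgen) hq hyq
  have hB : ringKrullDim B + 2 ≤ Fintype.card σ := by
    simpa [ringKrullDim_of_isNoetherianRing] using
      ringKrullDim_add_two_le_of_surjective hF hFg (f := (f.rangeRestrict : _ →+* B))
        f.rangeRestrict_surjective (Subtype.ext hxF) (Subtype.ext hxg)
  calc ringKrullDim A + 3 = ringKrullDim A + 1 + 2 := by rw [add_assoc]; norm_num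
    _ ≤ ringKrullDim B + Fintype.card ι + 2 := by gcongr
    _ = ringKrullDim B + 2 + Fintype.card ι := by abel
    _ ≤ Fintype.card σ + Fintype.card ι := by gcongr

theorem comap_rename_eq_span_singleton {k σ ι τ : Type*} [Field k] [Fintype σ] [Fintype ι]
    {φ : σ → τ} {χ : ι → τ} (hφχ : (Sum.elim φ χ).Surjective)
    {F : MvPolynomial σ k} (hF : Prime F) {P : Ideal (MvPolynomial τ k)} [P.IsPrime]
    (hdim : Fintype.card σ + Fintype.card ι < ringKrullDim (MvPolynomial τ k ⧸ P) + 3)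
    (hFP : rename φ F ∈ P) {p : MvPolynomial (σ ⊕ ι) k} (hpP : rename (Sum.elim φ χ) p ∈ P)
    {w : τ → k} (hw : w ∈ zeroLocus k P) {z : ι → k} (hz : eval (Sum.elim (w ∘ φ) z) p ≠ 0) :
    P.comap (rename φ) = Ideal.span {F} := by
  let π := Ideal.Quotient.mkₐ k P
  let ψ : (MvPolynomial τ k ⧸ P) →ₐ[k] k := Ideal.Quotient.liftₐ P (aeval w) hw
  have hψ : ψ ∘ π ∘ X ∘ φ = w ∘ φ := by
    ext i
    exact (Ideal.Quotient.lift_mk _ _ _).trans (aeval_X w (φ i))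
  have hπ : aeval (π ∘ X) = π := (aeval_unique π).symm
  have hx {f : MvPolynomial σ k} (hf : rename φ f ∈ P) : aeval (π ∘ X ∘ φ) f = 0 := by
    rw [← Function.comp_assoc, ← aeval_rename, hπ]
    exact Ideal.Quotient.eq_zero_iff_mem.mpr hf
  have hxy : Sum.elim (π ∘ X ∘ φ) (π ∘ X ∘ χ) = (π ∘ X) ∘ Sum.elim φ χ := by
    ext (i | i) <;> rfl
  have hp : aeval (Sum.elim (π ∘ X ∘ φ) (π ∘ X ∘ χ)) p = 0 := by
    rw [hxy, ← aeval_rename, hπ]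
    exact Ideal.Quotient.eq_zero_iff_mem.mpr hpP
  have hgen : Algebra.adjoin k (Set.range (π ∘ X ∘ φ) ∪ Set.range (π ∘ X ∘ χ)) = ⊤ := by
    rw [← Set.Sum.elim_range, hxy, hφχ.range_comp, Algebra.adjoin_range_eq_range_aeval, hπ]
    exact (AlgHom.range_eq_top _).mpr (Ideal.Quotient.mkₐ_surjective _ _)
  refine le_antisymm (fun g hg => Ideal.mem_span_singleton.mpr ?_)
    ((Ideal.span_singleton_le_iff_mem _).mpr hFP)
  by_contra hFg
  exact hdim.not_ge (ringKrullDim_add_three_le_of_not_dvd hgen hF hFg (hx hFP) (hx hg) hp ψ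
    (by rwa [hψ]))

theorem exists_inter_basicOpen_subset_of_isConstructible {R : Type*} [CommRing R]
    {s : Set (PrimeSpectrum R)} (hs : Topology.IsConstructible s) {Q : PrimeSpectrum R}
    (hQ : Q ∈ s) :
    ∃ f ∉ Q.asIdeal, PrimeSpectrum.zeroLocus Q.asIdeal ∩ PrimeSpectrum.basicOpen f ⊆ s := by
  obtain ⟨D, rfl⟩ := PrimeSpectrum.exists_constructibleSetData_iff.mpr hs
  simp only [PrimeSpectrum.ConstructibleSetData.toSet, Set.mem_iUnion] at hQ
  obtain ⟨E, hE, hg, hf⟩ := hQ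
  refine ⟨E.f, by simpa using hf, ?_⟩
  rintro q ⟨hQq, hq⟩
  exact Set.mem_biUnion hE ⟨Set.Subset.trans hg hQq, by simpa using hq⟩

theorem finitePresentation_of_finiteType_algebra {R A B : Type*} [CommRing R]
    [IsNoetherianRing R] [CommRing A] [CommRing B] [Algebra R A] [Algebra R B]
    [Algebra.FiniteType R A] [Algebra.FiniteType R B] (f : A →ₐ[R] B) :
    (f : A →+* B).FinitePresentation := by
  have : IsNoetherianRing A := Algebra.FiniteType.isNoetherianRing R A
  refine RingHom.FinitePresentation.of_finiteType.mp
    (RingHom.FiniteType.of_comp_finiteType (f := algebraMap R A) ?_)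
  rwa [f.comp_algebraMap, RingHom.finiteType_algebraMap]

theorem exists_notMem_comap_forall_exists_zeroLocus {K σ τ : Type*} [Field K] [IsAlgClosed K]
    [Finite σ] [Finite τ] (φ : MvPolynomial σ K →ₐ[K] MvPolynomial τ K)
    (P : Ideal (MvPolynomial τ K)) [hP : P.IsPrime] {b : MvPolynomial τ K} (hb : b ∉ P) :
    ∃ f ∉ P.comap φ, ∀ v ∈ zeroLocus K (P.comap φ), eval v f ≠ 0 →
      ∃ w ∈ zeroLocus K P, (fun i => eval w (φ (X i))) = v ∧ eval w b ≠ 0 := by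
  have hconstr : Topology.IsConstructible
      (PrimeSpectrum.zeroLocus (P : Set (MvPolynomial τ K)) ∩ PrimeSpectrum.basicOpen b) :=
    ((TopologicalSpace.NoetherianSpace.isCompact _).isConstructible
      (PrimeSpectrum.isClosed_zeroLocus _).isOpen_compl).of_compl.inter
      PrimeSpectrum.isConstructible_basicOpen
  obtain ⟨f, hf, hsub⟩ := exists_inter_basicOpen_subset_of_isConstructible
    (PrimeSpectrum.isConstructible_comap_image (finitePresentation_of_finiteType_algebra φ)
      hconstr) ⟨⟨P, hP⟩, ⟨Set.Subset.refl _, by simpa using hb⟩, rfl⟩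
  refine ⟨f, hf, fun v hv hvf => ?_⟩
  obtain ⟨q, ⟨hPq, hbq⟩, hqv⟩ := @hsub (pointToPoint v)
    ⟨le_zeroLocus_iff_le_vanishingIdeal.mp (Set.singleton_subset_iff.mpr hv),
      by simpa [pointToPoint, aeval_eq_eval] using hvf⟩
  have hbq' : b ∉ vanishingIdeal K (zeroLocus K q.asIdeal) := by
    rw [IsPrime.vanishingIdeal_zeroLocus]
    simpa using hbq
  simp only [mem_vanishingIdeal_iff, not_forall] at hbq'
  obtain ⟨w, hw, hwb⟩ := hbq'
  refine ⟨w, zeroLocus_anti_mono hPq hw, ?_, by simpa [aeval_eq_eval] using hwb⟩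
  ext i
  have hi : X i - C (v i) ∈ (PrimeSpectrum.comap (φ : _ →+* MvPolynomial τ K) q).asIdeal := by
    rw [hqv]
    simp [pointToPoint]
  simpa [sub_eq_zero, aeval_eq_eval] using hw _ hi

theorem totalDegree_pderiv_lt {σ R : Type*} [CommSemiring R] {p : MvPolynomial σ R} {i : σ}
    (h : pderiv i p ≠ 0) : (pderiv i p).totalDegree < p.totalDegree := by
  have key : ∀ m ∈ (pderiv i p).support, (m.sum fun _ e => e) < p.totalDegree := fun m hm => by
    rw [mem_support_iff, coeff_pderiv] at hm
    have := le_totalDegree (mem_support_iff.mpr (left_ne_zero_of_mul hm))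
    rw [Finsupp.sum_add_index' (fun _ => rfl) (fun _ _ _ => rfl),
      Finsupp.sum_single_index rfl] at this
    omega
  obtain ⟨m, hm⟩ := support_nonempty.mpr h
  exact (Finset.sup_lt_iff (bot_le.trans_lt (key m hm))).mpr key

theorem not_dvd_pderiv {σ R : Type*} [CommSemiring R] [NoZeroDivisors R] {p : MvPolynomial σ R}
    {i : σ} (h : pderiv i p ≠ 0) : ¬p ∣ pderiv i p := fun hdvd =>
  (totalDegree_pderiv_lt h).not_ge (totalDegree_le_of_dvd_of_isDomain hdvd h)

theorem sum_mul_eval_pderiv_rename {σ τ R : Type*} [CommSemiring R] [Fintype σ] [Fintype τ]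
    {φ : σ → τ} (hφ : φ.Injective) (u w : τ → R) (p : MvPolynomial σ R) :
    ∑ i, u i * eval w (pderiv i (rename φ p)) =
      ∑ j, u (φ j) * eval (w ∘ φ) (pderiv j p) := by
  refine (Fintype.sum_of_injective φ hφ _ _ (fun i hi => ?_) fun j => ?_).symm
  · rw [pderiv_eq_zero_of_notMem_vars fun h => hi ?_, map_zero, mul_zero]
    classical
    obtain ⟨j, -, rfl⟩ := Finset.mem_image.mp (vars_rename φ p h)
    exact ⟨j, rfl⟩
  · rw [pderiv_rename hφ, eval_rename]

section AlgebraicSets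

variable {n : ℕ}

theorem isAlgSet_zeroLocus (I : Ideal (MvPolynomial (Fin n) ℂ)) : IsAlgSet (zeroLocus ℂ I) :=
  ⟨I, by ext; simp [zeroSetOf, aeval_eq_eval]⟩

theorem IsAlgSet.zeroLocus_vanishingIdeal {S : Set (Fin n → ℂ)} (hS : IsAlgSet S) :
    zeroLocus ℂ (vanishingIdeal ℂ S) = S := by
  obtain ⟨I, rfl⟩ := hS
  refine (zeroLocus_vanishingIdeal_le _).antisymm' fun w hw f hf => ?_
  rw [← aeval_eq_eval]
  exact hw f fun z hz => by simpa [aeval_eq_eval] using hz f hf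

theorem IsAlgSet.sep_eval_eq_zero {S : Set (Fin n → ℂ)} (hS : IsAlgSet S)
    (f : MvPolynomial (Fin n) ℂ) : IsAlgSet {z ∈ S | eval z f = 0} := by
  obtain ⟨I, rfl⟩ := hS
  exact ⟨insert f I, by ext z; simp [zeroSetOf, and_comm]⟩

theorem IsIrredAlgSet.isPrime_vanishingIdeal {S : Set (Fin n → ℂ)} (hS : IsIrredAlgSet S) :
    (vanishingIdeal ℂ S).IsPrime := by
  obtain ⟨halg, ⟨w, hw⟩, hirr⟩ := hS
  refine ⟨(Ideal.ne_top_iff_one _).mpr fun h => by simpa using h w hw, fun {f g} hfg => ?_⟩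
  have hunion : S = {z ∈ S | eval z f = 0} ∪ {z ∈ S | eval z g = 0} := by
    rw [← Set.sep_or, eq_comm, Set.sep_eq_self_iff_mem_true]
    intro z hz
    simpa [aeval_eq_eval] using hfg z hz
  simp only [mem_vanishingIdeal_iff, aeval_eq_eval]
  exact (hirr _ _ (halg.sep_eval_eq_zero f) (halg.sep_eval_eq_zero g) hunion).imp
    (fun h z hz => (h ▸ hz).2) fun h z hz => (h ▸ hz).2

theorem isIrredAlgSet_zeroLocus (P : Ideal (MvPolynomial (Fin n) ℂ)) [hP : P.IsPrime] :
    IsIrredAlgSet (zeroLocus ℂ P) := by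
  have hvan : vanishingIdeal ℂ (zeroLocus ℂ P) = P := IsPrime.vanishingIdeal_zeroLocus P
  refine ⟨isAlgSet_zeroLocus P, Set.nonempty_iff_ne_empty.mpr fun hempty => hP.ne_top ?_,
    fun S₁ S₂ h₁ h₂ h => ?_⟩
  · rw [← hvan, hempty, vanishingIdeal_empty]
  · have hle : vanishingIdeal ℂ S₁ ⊓ vanishingIdeal ℂ S₂ ≤ P := by
      rw [← hvan, h]
      exact fun p hp z hz => hz.elim (hp.1 z) (hp.2 z)
    refine (hP.inf_le.mp hle).imp (fun hle₁ => ?_) fun hle₂ => ?_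
    · exact ((zeroLocus_anti_mono hle₁).trans h₁.zeroLocus_vanishingIdeal.le).antisymm
        (h ▸ Set.subset_union_left)
    · exact ((zeroLocus_anti_mono hle₂).trans h₂.zeroLocus_vanishingIdeal.le).antisymm
        (h ▸ Set.subset_union_right)

theorem vanishingIdeal_lt_vanishingIdeal {S T : Set (Fin n → ℂ)} (hS : IsAlgSet S)
    (hT : IsAlgSet T) (h : S < T) : vanishingIdeal ℂ T < vanishingIdeal ℂ S := by
  refine (vanishingIdeal_anti_mono h.le).lt_of_ne fun heq => h.ne ?_
  rw [← hS.zeroLocus_vanishingIdeal, ← heq, hT.zeroLocus_vanishingIdeal]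

theorem zeroLocus_lt_zeroLocus {P Q : Ideal (MvPolynomial (Fin n) ℂ)} [P.IsPrime] [Q.IsPrime]
    (h : P < Q) : zeroLocus ℂ Q < zeroLocus ℂ P := by
  refine (zeroLocus_anti_mono h.le).lt_of_ne fun heq => h.ne ?_
  rw [← IsPrime.vanishingIdeal_zeroLocus (K := ℂ) P, ← heq, IsPrime.vanishingIdeal_zeroLocus]

theorem le_ringKrullDim_quotient_of_strictMono {d : ℕ} {I : Ideal (MvPolynomial (Fin n) ℂ)}
    {Z : Fin (d + 1) → Set (Fin n → ℂ)} (hZ : ∀ i, IsIrredAlgSet (Z i) ∧ Z i ⊆ zeroLocus ℂ I)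
    (hmono : StrictMono Z) : d ≤ ringKrullDim (MvPolynomial (Fin n) ℂ ⧸ I) := by
  rw [ringKrullDim_quotient]
  let L : LTSeries (PrimeSpectrum.zeroLocus (I : Set (MvPolynomial (Fin n) ℂ))) :=
    LTSeries.mk d (fun i => ⟨⟨_, (hZ i.rev).1.isPrime_vanishingIdeal⟩,
        le_zeroLocus_iff_le_vanishingIdeal.mp (hZ i.rev).2⟩)
      fun i j hij => vanishingIdeal_lt_vanishingIdeal (hZ _).1.1 (hZ _).1.1
        (hmono (Fin.rev_lt_rev.mpr hij))
  exact Order.LTSeries.length_le_krullDim L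

theorem algDimLE_zeroLocus {d : ℕ} {I : Ideal (MvPolynomial (Fin n) ℂ)}
    (hd : ringKrullDim (MvPolynomial (Fin n) ℂ ⧸ I) ≤ d) : algDimLE (zeroLocus ℂ I) d := by
  intro Z hZ hmono
  have : d + 1 ≤ d := by
    exact_mod_cast (le_ringKrullDim_quotient_of_strictMono hZ hmono).trans hd
  omega

theorem IsIrredAlgSet.exists_subset_of_subset_sUnion {Z : Set (Fin n → ℂ)} (hZ : IsIrredAlgSet Z)
    {𝒮 : Set (Set (Fin n → ℂ))} (hfin : 𝒮.Finite) (halg : ∀ S ∈ 𝒮, IsAlgSet S)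
    (h : Z ⊆ ⋃₀ 𝒮) : ∃ S ∈ 𝒮, Z ⊆ S := by
  have hle : hfin.toFinset.inf (vanishingIdeal ℂ) ≤ vanishingIdeal ℂ Z := fun p hp z hz => by
    obtain ⟨S, hS, hzS⟩ := h hz
    exact (Finset.inf_le (f := vanishingIdeal ℂ) (hfin.mem_toFinset.mpr hS) hp :) z hzS
  obtain ⟨S, hS, hSZ⟩ := (Ideal.IsPrime.inf_le' hZ.isPrime_vanishingIdeal).mp hle
  rw [hfin.mem_toFinset] at hS
  refine ⟨S, hS, ?_⟩
  rw [← (halg S hS).zeroLocus_vanishingIdeal]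
  exact le_zeroLocus_iff_le_vanishingIdeal.mpr hSZ

theorem exists_le_ringKrullDim_of_algDimGE_sUnion {𝒮 : Set (Set (Fin n → ℂ))}
    (hfin : 𝒮.Finite) (halg : ∀ S ∈ 𝒮, IsAlgSet S) {d : ℕ} (hd : algDimGE (⋃₀ 𝒮) d) :
    ∃ S ∈ 𝒮, d ≤ ringKrullDim (MvPolynomial (Fin n) ℂ ⧸ vanishingIdeal ℂ S) := by
  obtain ⟨Z, hZ, hmono⟩ := hd
  obtain ⟨S, hS, hZS⟩ :=
    (hZ (Fin.last d)).1.exists_subset_of_subset_sUnion hfin halg (hZ (Fin.last d)).2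
  refine ⟨S, hS, le_ringKrullDim_quotient_of_strictMono (fun i => ⟨(hZ i).1, ?_⟩) hmono⟩
  rw [(halg S hS).zeroLocus_vanishingIdeal]
  exact (hmono.monotone (Fin.le_last i)).trans hZS

theorem finite_setOf_isComponentOf {W : Set (Fin n → ℂ)} (hW : IsAlgSet W) :
    {S | IsComponentOf S W}.Finite := by
  have hminimal : ∀ S, IsComponentOf S W →
      vanishingIdeal ℂ S ∈ (vanishingIdeal ℂ W).minimalPrimes := fun S ⟨hS, hSW, hmax⟩ => by
    refine ⟨⟨hS.isPrime_vanishingIdeal, vanishingIdeal_anti_mono hSW⟩, ?_⟩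
    rintro Q ⟨hQ, hWQ⟩ hQS
    rw [hmax (zeroLocus ℂ Q) (isIrredAlgSet_zeroLocus Q)
      ((zeroLocus_anti_mono hWQ).trans hW.zeroLocus_vanishingIdeal.le)
      (le_zeroLocus_iff_le_vanishingIdeal.mpr hQS), IsPrime.vanishingIdeal_zeroLocus]
  refine Set.Finite.of_finite_image (f := vanishingIdeal ℂ)
    (((vanishingIdeal ℂ W).finite_minimalPrimes_of_isNoetherianRing _).subset
      (Set.image_subset_iff.mpr hminimal)) fun S hS T hT hST => ?_
  rw [← hS.1.1.zeroLocus_vanishingIdeal, hST, hT.1.1.zeroLocus_vanishingIdeal]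

theorem localDimGE_of_le_ringKrullDim {d : ℕ} {P : Ideal (MvPolynomial (Fin n) ℂ)} [P.IsPrime]
    (hd : d ≤ ringKrullDim (MvPolynomial (Fin n) ℂ ⧸ P)) {X : Set (Fin n → ℂ)}
    (hX : zeroLocus ℂ P ⊆ X) {w : Fin n → ℂ} (hw : w ∈ zeroLocus ℂ P) : LocalDimGE X w d := by
  let π := Ideal.Quotient.mk P
  let ψ : (MvPolynomial (Fin n) ℂ ⧸ P) →ₐ[ℂ] ℂ := Ideal.Quotient.liftₐ P (aeval w) hw
  have hψ (f : MvPolynomial (Fin n) ℂ) : ψ (π f) = aeval w f := Ideal.Quotient.lift_mk _ _ _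
  have hmax : (RingHom.ker ψ).IsMaximal :=
    RingHom.ker_isMaximal_of_surjective ψ fun z => ⟨π (C z), by simp [hψ]⟩
  let m : PrimeSpectrum (MvPolynomial (Fin n) ℂ ⧸ P) := ⟨RingHom.ker ψ, hmax.isPrime⟩
  have hheight : d ≤ Order.height m := by
    obtain ⟨e, -, hdim, hheight⟩ :=
      exists_trdeg_eq_and_ringKrullDim_eq_and_height_eq ℂ (MvPolynomial (Fin n) ℂ ⧸ P)
    rw [← m.height_eq_orderHeight, hheight m.asIdeal]
    rw [hdim] at hd
    exact_mod_cast hd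
  obtain ⟨p, hp, rfl⟩ := Order.exists_series_of_le_height m hheight
  let Q (i : Fin (p.length + 1)) := (p i.rev).asIdeal.comap π
  have hPQ (i) : P ≤ Q i := fun f hf => by simp [Q, π, Ideal.Quotient.eq_zero_iff_mem.mpr hf]
  refine ⟨fun i => zeroLocus ℂ (Q i), fun i =>
    ⟨isIrredAlgSet_zeroLocus _, (zeroLocus_anti_mono (hPQ i)).trans hX⟩, fun i j hij => ?_, ?_⟩
  · exact zeroLocus_lt_zeroLocus
      ((Ideal.orderEmbeddingOfSurjective π Ideal.Quotient.mk_surjective).strictMono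
        (p.strictMono (Fin.rev_lt_rev.mpr hij)))
  · intro f hf
    have hf' : π f ∈ p.last.asIdeal := by simpa [Q, RelSeries.last] using hf
    rw [hp] at hf'
    exact (hψ f).symm.trans hf'

theorem isRegularPt_of_tangentDimLE {d : ℕ} {P : Ideal (MvPolynomial (Fin n) ℂ)} [P.IsPrime]
    (hd : d ≤ ringKrullDim (MvPolynomial (Fin n) ℂ ⧸ P)) {X : Set (Fin n → ℂ)}
    (hX : zeroLocus ℂ P ⊆ X) {w : Fin n → ℂ} (hw : w ∈ zeroLocus ℂ P) (hXd : algDimLE X d)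
    (htan : TangentDimLE X w d) : IsRegularPt X w :=
  ⟨hX hw, d, localDimGE_of_le_ringKrullDim hd hX hw,
    fun ⟨Z, hZ, hmono, _⟩ => hXd Z hZ hmono, htan⟩

/-- The Zariski tangent space of `X` at `w`: the set `TangentVecs X w`, as a linear subspace. -/
def tangentSubmodule (X : Set (Fin n → ℂ)) (w : Fin n → ℂ) : Submodule ℂ (Fin n → ℂ) where
  carrier := TangentVecs X w
  zero_mem' f _ := by simp
  add_mem' hu hv f hf := by simp [add_mul, Finset.sum_add_distrib, hu f hf, hv f hf]
  smul_mem' c u hu f hf := by simp [mul_assoc, ← Finset.mul_sum, hu f hf]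

theorem tangentDimLE_of_forall_eq_zero {d : ℕ} {X : Set (Fin n → ℂ)} {w : Fin n → ℂ}
    (L : (Fin n → ℂ) →ₗ[ℂ] (Fin d → ℂ)) (hL : ∀ u ∈ TangentVecs X w, L u = 0 → u = 0) :
    TangentDimLE X w d := by
  intro v hv hli
  have hspan : Submodule.span ℂ (Set.range v) ≤ tangentSubmodule X w :=
    Submodule.span_le.mpr (Set.range_subset_iff.mpr hv)
  have hdisj : Disjoint (Submodule.span ℂ (Set.range v)) (LinearMap.ker L) :=
    Submodule.disjoint_def.mpr fun u hu => hL u (hspan hu)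
  simpa using (hli.map hdisj).fintype_card_le_finrank

end AlgebraicSets

theorem exists_isAlgSet_forall_exists_comp_eq {m n : ℕ} {φ : Fin (n + 2) → Fin m}
    {F : MvPolynomial (Fin (n + 2)) ℂ} (hF : Prime F) {P : Ideal (MvPolynomial (Fin m) ℂ)}
    [P.IsPrime] (hP : P.comap (rename φ) = Ideal.span {F}) {b : MvPolynomial (Fin m) ℂ}
    (hb : b ∉ P) :
    ∃ Z₀ : Set (Fin (n + 2) → ℂ), IsAlgSet Z₀ ∧ Z₀ ⊆ {v | eval v F = 0} ∧ algDimLE Z₀ n ∧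
      ∀ v, eval v F = 0 → v ∉ Z₀ → ∃ w ∈ zeroLocus ℂ P, w ∘ φ = v ∧ eval w b ≠ 0 := by
  obtain ⟨f, hf, hlift⟩ := exists_notMem_comap_forall_exists_zeroLocus (rename φ) P hb
  rw [hP] at hf hlift
  have hZ₀ : ∀ v, v ∈ zeroLocus ℂ (Ideal.span {F, f}) ↔ eval v F = 0 ∧ eval v f = 0 := by
    simp [zeroLocus_span, aeval_eq_eval]
  have hdim : ringKrullDim (MvPolynomial (Fin (n + 2)) ℂ ⧸ Ideal.span {F, f}) ≤ n := by
    have h := ringKrullDim_add_two_le_of_surjective hF (mt Ideal.mem_span_singleton.mpr hf)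
      (Ideal.Quotient.mk_surjective (I := Ideal.span {F, f}))
      (Ideal.Quotient.eq_zero_iff_mem.mpr (Ideal.subset_span (by simp)))
      (Ideal.Quotient.eq_zero_iff_mem.mpr (Ideal.subset_span (by simp)))
    refine ENat.WithBot.add_le_add_natCast_right_iff (c := 2).mp ?_
    simpa [ringKrullDim_of_isNoetherianRing] using h
  refine ⟨zeroLocus ℂ (Ideal.span {F, f}), isAlgSet_zeroLocus _, fun v hv => ((hZ₀ v).mp hv).1,
    algDimLE_zeroLocus hdim, fun v hvF hv => ?_⟩
  obtain ⟨w, hw, hwv, hwb⟩ := hlift v (by simpa [zeroLocus_span, aeval_eq_eval] using hvF)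
    fun hvf => hv ((hZ₀ v).mpr ⟨hvF, hvf⟩)
  exact ⟨w, hw, by simpa [Function.comp_def] using hwv, hwb⟩

/-- The positions of `(x, y, s, t)` among the coordinates `(x, y, x', y', s, t)` of `ℂ⁶`: the
projection of `V` to its first copy of `Z(F)` is `w ↦ w ∘ fstIdx`. -/
def fstIdx : Fin 4 → Fin 6 := ![0, 1, 4, 5]

/-- The positions of `(x', y', s, t)` among the coordinates `(x, y, x', y', s, t)` of `ℂ⁶`: the
projection of `V` to its second copy of `Z(F)` is `w ↦ w ∘ sndIdx`. -/
def sndIdx : Fin 4 → Fin 6 := ![2, 3, 4, 5]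

theorem fstIdx_injective : fstIdx.Injective := by unfold fstIdx; decide

theorem sndIdx_injective : sndIdx.Injective := by unfold sndIdx; decide

theorem comp_fstIdx {α : Type*} (w : Fin 6 → α) : w ∘ fstIdx = ![w 0, w 1, w 4, w 5] := by
  ext i; fin_cases i <;> rfl

theorem comp_sndIdx {α : Type*} (w : Fin 6 → α) : w ∘ sndIdx = ![w 2, w 3, w 4, w 5] := by
  ext i; fin_cases i <;> rfl

section Wtilde

variable {F : MvPolynomial (Fin 4) ℂ}

theorem mem_Vvar_iff {w : Fin 6 → ℂ} :
    w ∈ Vvar F ↔ eval (w ∘ fstIdx) F = 0 ∧ eval (w ∘ sndIdx) F = 0 := by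
  rw [comp_fstIdx, comp_sndIdx]; rfl

variable (F) in
theorem isAlgSet_Wvar : IsAlgSet (Wvar F) := by
  refine ⟨{rename fstIdx F, rename sndIdx F,
    rename fstIdx (pderiv 2 F) * rename sndIdx (pderiv 3 F) -
      rename sndIdx (pderiv 2 F) * rename fstIdx (pderiv 3 F)}, ?_⟩
  ext w
  simp [Wvar, Vvar, Gval, zeroSetOf, eval_rename, comp_fstIdx, comp_sndIdx, and_assoc]

variable (F) in
theorem Wtilde_subset_Vvar : Wtilde F ⊆ Vvar F :=
  Set.sUnion_subset fun _ hS => hS.1.2.1.trans Set.inter_subset_left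

theorem comap_rename_eq_span_of_subset_Vvar (hF : Prime F)
    {P : Ideal (MvPolynomial (Fin 6) ℂ)} [P.IsPrime]
    (hdim : 4 ≤ ringKrullDim (MvPolynomial (Fin 6) ℂ ⧸ P)) (hV : zeroLocus ℂ P ⊆ Vvar F)
    (hV0 : ¬zeroLocus ℂ P ⊆ V0 F) :
    P.comap (rename fstIdx) = Ideal.span {F} ∧ P.comap (rename sndIdx) = Ideal.span {F} := by
  have hmem {e : Fin 4 → Fin 6} (he : ∀ w ∈ zeroLocus ℂ P, eval (w ∘ e) F = 0) :
      rename e F ∈ P := by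
    rw [← IsPrime.vanishingIdeal_zeroLocus (K := ℂ) P]
    exact fun w hw => by rw [aeval_eq_eval, eval_rename]; exact he w hw
  have hfst : rename fstIdx F ∈ P := hmem fun w hw => (mem_Vvar_iff.mp (hV hw)).1
  have hsnd : rename sndIdx F ∈ P := hmem fun w hw => (mem_Vvar_iff.mp (hV hw)).2
  obtain ⟨w, hw, hwV0⟩ := Set.not_subset.mp hV0
  obtain ⟨a, b, hab⟩ : ∃ a b, eval ![a, b, w 4, w 5] F ≠ 0 := by
    simpa [V0, TT, ev4] using hwV0
  have hdim' : ((Fintype.card (Fin 4) : ℕ) : WithBot ℕ∞) + (Fintype.card (Fin 2) : ℕ) <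
      ringKrullDim (MvPolynomial (Fin 6) ℂ ⧸ P) + 3 :=
    calc ((Fintype.card (Fin 4) : ℕ) : WithBot ℕ∞) + (Fintype.card (Fin 2) : ℕ)
      _ < 4 + 3 := by norm_cast
      _ ≤ ringKrullDim (MvPolynomial (Fin 6) ℂ ⧸ P) + 3 := by gcongr
  let e : Fin 4 → Fin 4 ⊕ Fin 2 := ![.inr 0, .inr 1, .inl 2, .inl 3]
  have key {φ ψ : Fin 4 → Fin 6} {χ : Fin 2 → Fin 6} (hφχ : (Sum.elim φ χ).Surjective)
      (hφ : rename φ F ∈ P) (hψ : rename ψ F ∈ P) (hψe : Sum.elim φ χ ∘ e = ψ)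
      (hwe : Sum.elim (w ∘ φ) ![a, b] ∘ e = ![a, b, w 4, w 5]) :
      P.comap (rename φ) = Ideal.span {F} :=
    comap_rename_eq_span_singleton hφχ hF hdim' hφ (by rwa [rename_rename, hψe]) hw
      (by rwa [eval_rename, hwe])
  exact ⟨
    key (χ := ![2, 3]) (by unfold fstIdx; decide) hfst hsnd (by ext i; fin_cases i <;> rfl)
      (by ext i; fin_cases i <;> rfl),
    key (χ := ![0, 1]) (by unfold sndIdx; decide) hsnd hfst (by ext i; fin_cases i <;> rfl)
      (by ext i; fin_cases i <;> rfl)⟩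

theorem exists_isPrime_comap_rename_eq_span (hF : Prime F) (hdim : algDimGE (Wtilde F) 4) :
    ∃ P : Ideal (MvPolynomial (Fin 6) ℂ), P.IsPrime ∧ zeroLocus ℂ P ⊆ Wtilde F ∧
      4 ≤ ringKrullDim (MvPolynomial (Fin 6) ℂ ⧸ P) ∧
      P.comap (rename fstIdx) = Ideal.span {F} ∧ P.comap (rename sndIdx) = Ideal.span {F} := by
  obtain ⟨S, ⟨hS, hSV0⟩, hdimS⟩ := exists_le_ringKrullDim_of_algDimGE_sUnion
    ((finite_setOf_isComponentOf (isAlgSet_Wvar F)).subset fun S hS => hS.1)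
    (fun S hS => hS.1.1.1) hdim
  have hP := hS.1.isPrime_vanishingIdeal
  have hzero := hS.1.1.zeroLocus_vanishingIdeal
  have hSW : S ⊆ Wtilde F := Set.subset_sUnion_of_mem ⟨hS, hSV0⟩
  exact ⟨_, hP, hzero.symm ▸ hSW, hdimS, comap_rename_eq_span_of_subset_Vvar hF hdimS
    (hzero.symm ▸ hSW.trans (Wtilde_subset_Vvar F)) (hzero.symm ▸ hSV0)⟩

theorem tangentDimLE_four {X : Set (Fin 6 → ℂ)} {w : Fin 6 → ℂ} (hX : X ⊆ Vvar F)
    (hfst : eval (w ∘ fstIdx) (pderiv 0 F) ≠ 0) (hsnd : eval (w ∘ sndIdx) (pderiv 0 F) ≠ 0) :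
    TangentDimLE X w 4 := by
  refine tangentDimLE_of_forall_eq_zero (LinearMap.funLeft ℂ ℂ ![1, 3, 4, 5]) fun u hu hLu => ?_
  have h1 : u 1 = 0 := congrFun hLu 0
  have h3 : u 3 = 0 := congrFun hLu 1
  have h4 : u 4 = 0 := congrFun hLu 2
  have h5 : u 5 = 0 := congrFun hLu 3
  have htan {φ : Fin 4 → Fin 6} (hφ : φ.Injective) (hF : ∀ z ∈ X, eval (z ∘ φ) F = 0) :
      ∑ j, u (φ j) * eval (w ∘ φ) (pderiv j F) = 0 := by
    rw [← sum_mul_eval_pderiv_rename hφ]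
    exact hu _ fun z hz => by rw [eval_rename]; exact hF z hz
  have h0 : u 0 = 0 := by
    have := htan fstIdx_injective fun z hz => (mem_Vvar_iff.mp (hX hz)).1
    rw [Fin.sum_univ_four] at this
    change u 0 * _ + u 1 * _ + u 4 * _ + u 5 * _ = 0 at this
    simpa [h1, h4, h5, hfst] using this
  have h2 : u 2 = 0 := by
    have := htan sndIdx_injective fun z hz => (mem_Vvar_iff.mp (hX hz)).2
    rw [Fin.sum_univ_four] at this
    change u 2 * _ + u 3 * _ + u 4 * _ + u 5 * _ = 0 at this
    simpa [h3, h4, h5, hsnd] using this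
  ext j
  fin_cases j <;> assumption

end Wtilde

/-- **Lemma 3.3.** If `W̃` is four-dimensional, then there is a subvariety `Z₀ ⊆ Z(F)` of
dimension at most 2 such that every point of `Z(F)\Z₀` extends, by a choice of `x',y'`, to a
regular point of `W̃` at which no partial derivative of `F` vanishes in either group of
variables. -/
theorem regular_point_off_small_variety (F : MvPolynomial (Fin 4) ℂ) (δ : ℕ)
    (hirr : Irreducible F) (hdeg : F.totalDegree = δ)
    (hder : ∀ i : Fin 4, pderiv i F ≠ 0)
    (hdim : algDimLE (Wtilde F) 4 ∧ algDimGE (Wtilde F) 4) :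
    ∃ Z₀ : Set (Fin 4 → ℂ), IsAlgSet Z₀ ∧ Z₀ ⊆ {v | eval v F = 0} ∧ algDimLE Z₀ 2 ∧
      ∀ v : Fin 4 → ℂ, eval v F = 0 → v ∉ Z₀ →
        ∃ x' y' : ℂ,
          IsRegularPt (Wtilde F) ![v 0, v 1, x', y', v 2, v 3] ∧
          (∀ i : Fin 4, eval ![v 0, v 1, v 2, v 3] (pderiv i F) ≠ 0) ∧
          (∀ i : Fin 4, eval ![x', y', v 2, v 3] (pderiv i F) ≠ 0) := by
  obtain ⟨P, hP, hPW, hdimP, hfst, hsnd⟩ := exists_isPrime_comap_rename_eq_span hirr.prime hdim.2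
  have hb : ∏ i, rename fstIdx (pderiv i F) * rename sndIdx (pderiv i F) ∉ P := by
    have hndvd (i : Fin 4) : pderiv i F ∉ Ideal.span {F} :=
      mt Ideal.mem_span_singleton.mp (not_dvd_pderiv (hder i))
    rw [hP.prod_mem_iff]
    rintro ⟨i, -, hi⟩
    exact (hP.mem_or_mem hi).elim (fun h => hndvd i (hfst ▸ h)) fun h => hndvd i (hsnd ▸ h)
  obtain ⟨Z₀, hZ₀, hZ₀F, hdimZ₀, hlift⟩ :=
    exists_isAlgSet_forall_exists_comp_eq hirr.prime hfst hb
  refine ⟨Z₀, hZ₀, hZ₀F, hdimZ₀, fun v hvF hv => ?_⟩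
  obtain ⟨w, hw, rfl, hwb⟩ := hlift v hvF hv
  obtain ⟨hfst', hsnd'⟩ : (∀ i, eval (w ∘ fstIdx) (pderiv i F) ≠ 0) ∧
      ∀ i, eval (w ∘ sndIdx) (pderiv i F) ≠ 0 := by
    simpa [eval_rename, Finset.prod_ne_zero_iff, forall_and] using hwb
  have hreg := isRegularPt_of_tangentDimLE hdimP hPW hw hdim.1
    (tangentDimLE_four (Wtilde_subset_Vvar F) (hfst' 0) (hsnd' 0))
  have hw6 : ![w 0, w 1, w 2, w 3, w 4, w 5] = w := by ext i; fin_cases i <;> rfl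
  exact ⟨w 2, w 3, hw6.symm ▸ hreg, comp_fstIdx w ▸ hfst', comp_sndIdx w ▸ hsnd'⟩
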